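/- The radial distribution distance is not a metric: there exist non-isomorphic rooted metric measure spaces at radial distribution distance 0. Precisely, let X = {a,b,c} be the three-point metric space in which the distance between any two distinct points is 1, with origin a. Let μ₁ be the measure assigning mass 1 to each of a, b, c, and let μ₂ be the measure assigning mass 1 to a, mass 1/2 to b, and mass 3/2 to c. Then: (i) d_rd((X,μ₁,a),(X,μ₂,a)) = 0, and (ii) there is no bijection f : X → X with f(a) = a that preserves distances and satisfies f_*μ₁ = μ₂. -/

import Mathlib

open MeasureTheory Metric

/-- The radial distribution distance between rooted metric measure spaces:
`d_rd((X,o),(Y,o')) = ∫₀^∞ e^{-r} |μ(B̄_r(o)) - ν(B̄_r(o'))| dr`. -/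
noncomputable def radialDistrDist {X Y : Type*} [MetricSpace X] [MetricSpace Y]
    [MeasurableSpace X] [MeasurableSpace Y]
    (μ : Measure X) (o : X) (ν : Measure Y) (o' : Y) : ℝ :=
  ∫ r in Set.Ioi (0 : ℝ),
    Real.exp (-r) * |(μ (closedBall o r)).toReal - (ν (closedBall o' r)).toReal|

/-- A three-point set `{a, b, c}`. -/
inductive ThreePoint : Type
  | a : ThreePoint
  | b : ThreePoint
  | c : ThreePoint
  deriving DecidableEq

/-- The metric on `{a, b, c}` in which any two distinct points are at
distance `1`. -/
noncomputable instance : MetricSpace ThreePoint where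
  dist x y := if x = y then 0 else 1
  dist_self x := by simp
  dist_comm x y := by
    show (if x = y then (0:ℝ) else 1) = if y = x then 0 else 1
    by_cases h : x = y
    · simp [h]
    · rw [if_neg h, if_neg (Ne.symm h)]
  dist_triangle x y z := by
    show (if x = z then (0:ℝ) else 1) ≤
      (if x = y then (0:ℝ) else 1) + (if y = z then (0:ℝ) else 1)
    by_cases hxz : x = z
    · simp only [hxz, if_pos rfl]
      positivity
    · by_cases hxy : x = y
      · by_cases hyz : y = z
        · exact absurd (hxy.trans hyz) hxz
        · simp [hxz, hxy, hyz]
      · simp only [if_neg hxz, if_neg hxy]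
        have : (0:ℝ) ≤ if y = z then 0 else 1 := by positivity
        linarith
  eq_of_dist_eq_zero := by
    intro x y h
    by_contra hxy
    change (if x = y then (0:ℝ) else 1) = 0 at h
    rw [if_neg hxy] at h
    exact one_ne_zero h

instance : MeasurableSpace ThreePoint := ⊤

/-- The measure assigning mass `1` to each of `a`, `b`, `c`. -/
noncomputable def tpMeasure₁ : Measure ThreePoint :=
  Measure.dirac ThreePoint.a + Measure.dirac ThreePoint.b + Measure.dirac ThreePoint.c

/-- The measure assigning mass `1` to `a`, mass `1/2` to `b`, and mass `3/2`
to `c`. -/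
noncomputable def tpMeasure₂ : Measure ThreePoint :=
  Measure.dirac ThreePoint.a + (1/2 : ENNReal) • Measure.dirac ThreePoint.b
    + (3/2 : ENNReal) • Measure.dirac ThreePoint.c

/-- The radial distribution distance is not a metric: the two rooted mm spaces
`(ThreePoint, tpMeasure₁, a)` and `(ThreePoint, tpMeasure₂, a)` are at radial
distribution distance `0`, yet there is no distance-preserving,
measure-preserving bijection between them fixing the origin `a`. -/
theorem radialDistrDist_not_a_metric :
    radialDistrDist tpMeasure₁ ThreePoint.a tpMeasure₂ ThreePoint.a = 0 ∧
    ¬ ∃ f : ThreePoint → ThreePoint, Function.Bijective f ∧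
        f ThreePoint.a = ThreePoint.a ∧
        (∀ x y : ThreePoint, dist (f x) (f y) = dist x y) ∧
        Measure.map f tpMeasure₁ = tpMeasure₂ := by
  have hd : ∀ x y : ThreePoint, dist x y = if x = y then (0:ℝ) else 1 := fun _ _ => rfl
  have hms : ∀ s : Set ThreePoint, MeasurableSet s := fun _ => trivial
  constructor
  · unfold radialDistrDist
    apply setIntegral_eq_zero_of_forall_eq_zero
    intro r hr
    have hr0 : (0:ℝ) ≤ r := le_of_lt hr
    have h32 : (1 : ENNReal) + 1 = 1/2 + 3/2 := by
      rw [ENNReal.div_add_div_same, ENNReal.eq_div_iff (by norm_num) (by norm_num)]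
      norm_num
    have key : tpMeasure₁ (closedBall ThreePoint.a r) = tpMeasure₂ (closedBall ThreePoint.a r) := by
      by_cases h1 : 1 ≤ r
      · have hb : closedBall ThreePoint.a r = Set.univ := by
          ext x
          cases x <;> simp [mem_closedBall, hd, hr0, h1]
        rw [hb]
        simp only [tpMeasure₁, tpMeasure₂, Measure.add_apply, Measure.smul_apply, measure_univ,
          smul_eq_mul, mul_one, add_assoc]
        rw [h32]
      · have hb : closedBall ThreePoint.a r = {ThreePoint.a} := by
          ext x
          cases x <;> simp [mem_closedBall, hd, hr0, h1]
        rw [hb]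
        simp [tpMeasure₁, tpMeasure₂, Measure.dirac_apply' _ (hms _)]
    rw [key]
    simp
  · rintro ⟨f, hf, -, -, hmap⟩
    obtain ⟨x, hx⟩ := hf.2 ThreePoint.b
    have hpre : f ⁻¹' {ThreePoint.b} = {x} := by
      ext y
      simp only [Set.mem_preimage, Set.mem_singleton_iff]
      exact ⟨fun h => hf.1 (h.trans hx.symm), fun h => h ▸ hx⟩
    have h := congrArg (fun m : Measure ThreePoint => m {ThreePoint.b}) hmap
    have hfm : Measurable f := fun s _ => hms _
    simp only [Measure.map_apply hfm (hms _), hpre] at h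
    have h2 : tpMeasure₂ {ThreePoint.b} = 1/2 := by
      simp [tpMeasure₂, Measure.dirac_apply' _ (hms _)]
    have h1 : tpMeasure₁ {x} = 1 := by
      cases x <;> simp [tpMeasure₁, Measure.dirac_apply' _ (hms _)]
    rw [h1, h2] at h
    have := congrArg ENNReal.toReal h
    norm_num at this
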